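/- For all integers m, n ≥ 0, the lucasnomial coefficient {m+n choose n} is a polynomial with nonnegative integer coefficients; that is, there exists a polynomial P ∈ ℤ[s,t] all of whose coefficients are nonnegative such that P·{m}!·{n}! = {m+n}!. -/

import Mathlib

/-!
Lucas polynomials satisfy the addition formula
`{a+b+2} = {b+2}·{a+1} + t·{a}·{b+1}` (`lucas_add`). Multiplying it by `{a+b+1}!` gives a
Pascal-type recursion
`C(a+1, b+1) = {b+2}·C(a, b+1) + t·{a}·C(a+1, b)`
for `C(m, n) = {m+n}! / ({m}!·{n}!)`. Its coefficients are polynomials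
with nonnegative coefficients, and such polynomials are closed under sums and products, so the
claim follows by induction on `m` and `n`.
-/

open MvPolynomial

/-- The Lucas polynomials in ℤ[s,t], where `X 0` is `s` and `X 1` is `t`:
`{0} = 0`, `{1} = 1`, `{n} = s·{n-1} + t·{n-2}`. -/
noncomputable def lucas : ℕ → MvPolynomial (Fin 2) ℤ
  | 0 => 0
  | 1 => 1
  | n + 2 => X 0 * lucas (n + 1) + X 1 * lucas n

/-- The Lucas factorial: `{0}! = 1`, `{n}! = {n}·{n-1}!`. -/
noncomputable def lucasFactorial : ℕ → MvPolynomial (Fin 2) ℤ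
  | 0 => 1
  | n + 1 => lucas (n + 1) * lucasFactorial n

/-- Polynomials all of whose coefficients are nonnegative. -/
def NonnegCoeffs (P : MvPolynomial (Fin 2) ℤ) : Prop :=
  ∀ k : Fin 2 →₀ ℕ, 0 ≤ P.coeff k

lemma NonnegCoeffs.add {P Q : MvPolynomial (Fin 2) ℤ} (hP : NonnegCoeffs P)
    (hQ : NonnegCoeffs Q) : NonnegCoeffs (P + Q) := fun k => by
  rw [coeff_add]
  exact add_nonneg (hP k) (hQ k)

lemma NonnegCoeffs.mul {P Q : MvPolynomial (Fin 2) ℤ} (hP : NonnegCoeffs P)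
    (hQ : NonnegCoeffs Q) : NonnegCoeffs (P * Q) := fun k => by
  rw [coeff_mul]
  exact Finset.sum_nonneg fun x _ => mul_nonneg (hP x.1) (hQ x.2)

lemma nonnegCoeffs_one : NonnegCoeffs 1 := fun k => by
  rw [coeff_one]
  split_ifs <;> simp

lemma nonnegCoeffs_X (i : Fin 2) : NonnegCoeffs (X i) := fun k => by
  rw [coeff_X]
  split_ifs <;> simp

lemma nonnegCoeffs_lucas (n : ℕ) : NonnegCoeffs (lucas n) := by
  induction n using lucas.induct with
  | case1 => exact fun k => by simp [lucas]
  | case2 => exact nonnegCoeffs_one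
  | case3 n ih₁ ih₀ =>
    rw [lucas]
    exact ((nonnegCoeffs_X 0).mul ih₁).add ((nonnegCoeffs_X 1).mul ih₀)

lemma lucas_add (a b : ℕ) :
    lucas (a + b + 2) = lucas (b + 2) * lucas (a + 1) + X 1 * lucas a * lucas (b + 1) := by
  induction a generalizing b with
  | zero => simp [lucas]
  | succ a ih =>
    have h := ih (b + 1)
    rw [show a + 1 + b + 2 = a + (b + 1) + 2 by ring, h,
      show lucas (b + 1 + 2) = X 0 * lucas (b + 2) + X 1 * lucas (b + 1) from rfl,
      show lucas (a + 1 + 1) = X 0 * lucas (a + 1) + X 1 * lucas a from rfl]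
    ring

theorem lucasnomial_nonneg_coeffs (m n : ℕ) :
    ∃ P : MvPolynomial (Fin 2) ℤ,
      (∀ k : Fin 2 →₀ ℕ, 0 ≤ P.coeff k) ∧
      P * lucasFactorial m * lucasFactorial n = lucasFactorial (m + n) := by
  induction m generalizing n with
  | zero => exact ⟨1, nonnegCoeffs_one, by simp [lucasFactorial]⟩
  | succ a iha =>
    induction n with
    | zero => exact ⟨1, nonnegCoeffs_one, by simp [lucasFactorial]⟩
    | succ b ihb =>
      obtain ⟨P, hP, eP⟩ := iha (b + 1)
      obtain ⟨Q, hQ, eQ⟩ := ihb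
      refine ⟨lucas (b + 2) * P + X 1 * lucas a * Q,
        ((nonnegCoeffs_lucas _).mul hP).add
          (((nonnegCoeffs_X 1).mul (nonnegCoeffs_lucas a)).mul hQ), ?_⟩
      rw [show a + (b + 1) = a + b + 1 by ring] at eP
      rw [show a + 1 + b = a + b + 1 by ring] at eQ
      rw [show a + 1 + (b + 1) = a + b + 1 + 1 by ring,
        show lucasFactorial (a + b + 1 + 1) = lucas (a + b + 2) * lucasFactorial (a + b + 1)
          from rfl, lucas_add]
      simp only [lucasFactorial] at eP eQ ⊢
      linear_combination lucas (b + 2) * lucas (a + 1) * eP + X 1 * lucas a * lucas (b + 1) * eQ
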